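/- Let G be the CPDAG of the Markov equivalence class of a DAG, and let X and Y be distinct nodes. If Y is an explicit ancestor of X in G (there is a fully directed path from Y to X in G), then X is a definite non-ancestor of Y in G (there is no possibly directed path from X to Y in G). -/

import Mathlib

/-- A directed acyclic graph on node set `V`: a directed edge relation with no
directed cycles (no edge `a → b` together with a directed path from `b` back to `a`). -/
structure Dag (V : Type*) where
  edge : V → V → Prop
  acyclic : ∀ a b : V, edge a b → ¬ Relation.ReflTransGen edge b a

variable {V : Type*}

namespace Dag

/-- `a` is an ancestor of `b` (equivalently, `b` is a descendant of `a`):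
there is a directed path from `a` to `b`; every node is its own ancestor. -/
def Anc (D : Dag V) (a b : V) : Prop := Relation.ReflTransGen D.edge a b

/-- `a` and `b` are adjacent (joined by an edge in either direction). -/
def Adj (D : Dag V) (a b : V) : Prop := D.edge a b ∨ D.edge b a

/-- The parents of `x` in the DAG `D`. -/
def Pa (D : Dag V) (x : V) : Set V := {a | D.edge a x}

/-- The Markov blanket of `x`: parents, children, and parents of children of `x`
(excluding `x` itself). -/
def MB (D : Dag V) (x : V) : Set V :=
  {v | v ≠ x ∧ (D.edge v x ∨ D.edge x v ∨ ∃ c : V, D.edge x c ∧ D.edge v c)}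

end Dag

/-- A path between `x` and `y` with respect to an adjacency relation `A`:
a sequence of distinct nodes, starting at `x` and ending at `y`, in which
consecutive nodes are adjacent. `n` is the number of edges of the path. -/
structure GPath (A : V → V → Prop) (x y : V) where
  n : ℕ
  f : Fin (n + 1) → V
  inj : Function.Injective f
  first : f ⟨0, by omega⟩ = x
  last : f ⟨n, by omega⟩ = y
  adj : ∀ i : Fin n, A (f i.castSucc) (f i.succ)

namespace GPath

/-- The non-endpoint node at position `i` of the path `p` is a collider with respect
to the directed edge relation `E`: both incident edges of the path point into it. -/
def ColliderAt {A : V → V → Prop} {x y : V} (p : GPath A x y)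
    (E : V → V → Prop) (i : ℕ) : Prop :=
  ∃ (_ : 0 < i) (_ : i < p.n),
    E (p.f ⟨i - 1, by omega⟩) (p.f ⟨i, by omega⟩) ∧
    E (p.f ⟨i + 1, by omega⟩) (p.f ⟨i, by omega⟩)

/-- The path `p` is blocked by the node set `S` in the DAG `D`: it contains a
non-collider that lies in `S`, or a collider such that neither the collider nor any
of its descendants lies in `S`. -/
def Blocked {A : V → V → Prop} {x y : V} (p : GPath A x y)
    (D : Dag V) (S : Set V) : Prop :=
  ∃ (i : ℕ) (_ : 0 < i) (_ : i < p.n),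
    (¬ p.ColliderAt D.edge i ∧ p.f ⟨i, by omega⟩ ∈ S) ∨
    (p.ColliderAt D.edge i ∧ ∀ d : V, D.Anc (p.f ⟨i, by omega⟩) d → d ∉ S)

end GPath

namespace Dag

/-- `x` and `y` are d-separated by `S` in the DAG `D`: every path between `x` and `y`
is blocked by `S`. -/
def dSep (D : Dag V) (x y : V) (S : Set V) : Prop :=
  ∀ p : GPath D.Adj x y, p.Blocked D S

/-- Two DAGs on the same node set are Markov equivalent if they have exactly the same
d-separation relations. -/
def MEquiv (D D' : Dag V) : Prop :=
  ∀ (x y : V) (S : Set V), D.dSep x y S ↔ D'.dSep x y S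

/-- The edge between `a` and `b` is directed `a → b` in the CPDAG of the Markov
equivalence class of `D`: the edge `a → b` holds in every DAG Markov equivalent to `D`. -/
def CpDir (D : Dag V) (a b : V) : Prop :=
  ∀ D' : Dag V, D.MEquiv D' → D'.edge a b

/-- The edge between `a` and `b` is undirected (`a − b`) in the CPDAG: `a` and `b` are
adjacent (the CPDAG has the same adjacencies as the DAGs of the MEC) but the edge is not
directed either way in the CPDAG. -/
def CpUndir (D : Dag V) (a b : V) : Prop :=
  D.Adj a b ∧ ¬ D.CpDir a b ∧ ¬ D.CpDir b a

/-- `Pa_G(a)`: the nodes with a directed edge into `a` in the CPDAG. -/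
def CpPa (D : Dag V) (a : V) : Set V := {p | D.CpDir p a}

/-- `Ch_G(a)`: the nodes `b` with the edge directed `a → b` in the CPDAG. -/
def CpCh (D : Dag V) (a : V) : Set V := {c | D.CpDir a c}

/-- `Sib_G(a)`: the nodes joined to `a` by an undirected edge in the CPDAG. -/
def CpSib (D : Dag V) (a : V) : Set V := {s | D.CpUndir a s}

end Dag

namespace GPath

/-- `p` is a possibly directed path in the CPDAG: no edge on it is directed
backwards (as `V_i ← V_{i+1}`) in the CPDAG. -/
def CpPossiblyDirected {D : Dag V} {x y : V} (p : GPath D.Adj x y) : Prop :=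
  ∀ i : Fin p.n, ¬ D.CpDir (p.f i.succ) (p.f i.castSucc)

/-- `p` is a (fully) directed path in the CPDAG: every edge on it is directed
forwards in the CPDAG. -/
def CpDirected {D : Dag V} {x y : V} (p : GPath D.Adj x y) : Prop :=
  ∀ i : Fin p.n, D.CpDir (p.f i.castSucc) (p.f i.succ)

/-- `p` is a directed path from `x` to `y` in the DAG `D` itself. -/
def DirectedIn {D : Dag V} {x y : V} (p : GPath D.Adj x y) : Prop :=
  ∀ i : Fin p.n, D.edge (p.f i.castSucc) (p.f i.succ)

/-- `p` is unshielded: for every three consecutive nodes on it, the first and the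
third are non-adjacent. -/
def Unshielded {D : Dag V} {x y : V} (p : GPath D.Adj x y) : Prop :=
  ∀ (i : ℕ) (_ : i + 2 ≤ p.n), ¬ D.Adj (p.f ⟨i, by omega⟩) (p.f ⟨i + 2, by omega⟩)

end GPath

namespace Dag

/-- `x` is a possible ancestor of `y` in the CPDAG: there is a possibly directed path
from `x` to `y`. -/
def PossAn (D : Dag V) (x y : V) : Prop :=
  ∃ p : GPath D.Adj x y, p.CpPossiblyDirected

/-- `x` is an explicit ancestor of `y` in the CPDAG: there is a fully directed path
from `x` to `y` in the CPDAG. -/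
def ExplAn (D : Dag V) (x y : V) : Prop :=
  ∃ p : GPath D.Adj x y, p.CpDirected

/-- The CPDAG is amenable relative to `(x, y)`: every possibly directed path from
`x` to `y` starts with a directed edge out of `x`. -/
def Amenable (D : Dag V) (x y : V) : Prop :=
  ∀ p : GPath D.Adj x y, p.CpPossiblyDirected →
    ∀ _ : 0 < p.n, D.CpDir (p.f ⟨0, by omega⟩) (p.f ⟨1, by omega⟩)

/-- `S` is a valid adjustment set for `(x, y)` in the DAG `D`:
(i) no element of `S` is a descendant of any node `w ≠ x` lying on a directed path
from `x` to `y`, and (ii) every path between `x` and `y` that is not a directed path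
from `x` to `y` is blocked by `S`. -/
def ValidAdjustment (D : Dag V) (x y : V) (S : Set V) : Prop :=
  (∀ s ∈ S, ∀ w : V, w ≠ x → D.Anc x w → D.Anc w y → ¬ D.Anc w s) ∧
  (∀ p : GPath D.Adj x y, ¬ p.DirectedIn → p.Blocked D S)

/-- `Cn_D(x, y)`: the nodes `w ≠ x` lying on some directed path from `x` to `y` in `D`. -/
def Cn (D : Dag V) (x y : V) : Set V := {w | w ≠ x ∧ D.Anc x w ∧ D.Anc w y}

end Dag

/-!
The heart of the matter is that `a → b` and `b − c` in a CPDAG imply `a → c`. A fully directed walk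
from `Y` to `X` can then be pushed along a possibly directed path from `X` to `Y`, which leaves a
directed cycle through `Y` in the DAG.

Call an edge forced if Meek's rules derive its orientation from the immoralities. The rules give the
implication for forced and unforced edges, so it remains to see that an unforced edge is oriented in
either way by some Markov equivalent DAG. In every set of vertices, one that is last for `D` is
simplicial in the graph of unforced edges. So this graph has an ordering that starts at any
prescribed vertex and in which the earlier neighbours of each vertex form a clique. Orienting the
unforced edges along it creates neither cycles nor immoralities.

That DAGs with the same skeleton and the same immoralities are Markov equivalent is shown by
Chickering's argument: they are linked by reversals of covered edges. Such a reversal preserves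
d-connection because a Bayes ball can be followed through it step by step.
-/

namespace Dag

variable {D D' D'' : Dag V} {S : Set V} {a b c d p s t u v w x y : V}

section Basic

lemma not_edge_self : ¬ D.edge a a := fun h => D.acyclic a a h .refl

lemma edge.adj (h : D.edge a b) : D.Adj a b := Or.inl h

lemma edge.anc (h : D.edge a b) : D.Anc a b := .single h

lemma edge.asymm (h : D.edge a b) : ¬ D.edge b a := fun h' => D.acyclic a b h h'.anc

lemma edge.ne (h : D.edge a b) : a ≠ b := by
  rintro rfl
  exact not_edge_self h

lemma Adj.symm (h : D.Adj a b) : D.Adj b a := Or.symm h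

lemma Adj.ne (h : D.Adj a b) : a ≠ b := h.elim edge.ne fun h' => h'.ne.symm

lemma Anc.antisymm (hab : D.Anc a b) (hba : D.Anc b a) : a = b := by
  rcases Relation.ReflTransGen.cases_head hab with rfl | ⟨c, hac, hcb⟩
  · rfl
  · exact absurd (hcb.trans hba) (D.acyclic a c hac)

lemma edge.trans_of_adj (hab : D.edge a b) (hbc : D.edge b c) (hac : D.Adj a c) : D.edge a c :=
  hac.resolve_right fun hca => D.acyclic a b hab (hbc.anc.tail hca)

lemma not_transGen_self {R : V → V → Prop} (hR : ∀ u v, R u v → D.edge u v) :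
    ¬ Relation.TransGen R a a := by
  intro h
  obtain ⟨b, hab, hba⟩ := Relation.TransGen.head'_iff.1 h
  exact D.acyclic a b (hR a b hab) (hba.lift id hR)

lemma transGen_of_transGen_of_forall {R U : V → V → Prop}
    (hRU : ∀ u v w, R u v → U v w → R u w) (hab : Relation.TransGen R a b) (hbc : U b c) :
    Relation.TransGen R a c := by
  obtain ⟨d, had, hdb⟩ := Relation.TransGen.tail'_iff.1 hab
  exact Relation.TransGen.tail'_iff.2 ⟨d, had, hRU d b c hdb hbc⟩

/-- The set of ancestors of `v`. It grows strictly along edges, so it serves as a topological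
rank of `D` with values in the poset `Set V`. -/
def ancestors (D : Dag V) (v : V) : Set V := {u | D.Anc u v}

lemma edge.ancestors_lt (h : D.edge a b) : D.ancestors a < D.ancestors b :=
  ⟨fun _ hu => hu.tail h, fun hsub => D.acyclic a b h (hsub Relation.ReflTransGen.refl)⟩

lemma wellFounded_edge [Finite V] (D : Dag V) : WellFounded D.edge :=
  Subrelation.wf edge.ancestors_lt (InvImage.wf D.ancestors wellFounded_lt)

lemma wellFounded_flip_edge [Finite V] (D : Dag V) : WellFounded (flip D.edge) :=
  Subrelation.wf (fun h => edge.ancestors_lt h) (InvImage.wf D.ancestors wellFounded_gt)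

/-- The DAG with edge relation `E`, whose acyclicity is witnessed by a rank that increases
strictly along `E`. -/
def ofRank {α : Type*} [Preorder α] (E : V → V → Prop) (r : V → α)
    (hr : ∀ a b, E a b → r a < r b) : Dag V where
  edge := E
  acyclic a b hab hba := by
    have hle : r b ≤ r a := by
      clear hab
      induction hba with
      | refl => exact le_rfl
      | tail _ h ih => exact ih.trans (hr _ _ h).le
    exact (hr a b hab).not_ge hle

end Basic

section ActivePath

/-- Some descendant of `v` lies in `S`. -/
def HasDescendantIn (D : Dag V) (S : Set V) (v : V) : Prop := ∃ d ∈ S, D.Anc v d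

lemma HasDescendantIn.of_edge (h : D.edge v w) :
    D.HasDescendantIn S w → D.HasDescendantIn S v :=
  fun ⟨d, hdS, hwd⟩ => ⟨d, hdS, hwd.head h⟩

/-- The node `v`, visited between its neighbours `a` and `b`, does not block a path given `S`. -/
def ActiveAt (D : Dag V) (S : Set V) (a v b : V) : Prop :=
  (D.edge a v ∧ D.edge b v → D.HasDescendantIn S v) ∧ (¬ (D.edge a v ∧ D.edge b v) → v ∉ S)

lemma activeAt_of_collider (ha : D.edge a v) (hb : D.edge b v) :
    D.ActiveAt S a v b ↔ D.HasDescendantIn S v := by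
  simp [ActiveAt, ha, hb]

lemma activeAt_of_edge_left (h : D.edge v a) : D.ActiveAt S a v b ↔ v ∉ S := by
  simp [ActiveAt, h.asymm]

lemma activeAt_of_edge_right (h : D.edge v b) : D.ActiveAt S a v b ↔ v ∉ S := by
  simp [ActiveAt, h.asymm]

/-- The nodes `f 0, …, f n` form a path of `D` that `S` does not block. Only the values of `f` up
to `n` matter, so shortening a path just decreases `n`. -/
structure ActivePath (D : Dag V) (S : Set V) (f : ℕ → V) (n : ℕ) : Prop where
  injOn : Set.InjOn f (Set.Iic n)
  adj : ∀ i < n, D.Adj (f i) (f (i + 1))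
  active : ∀ i, i + 1 < n → D.ActiveAt S (f i) (f (i + 1)) (f (i + 2))

/-- The path `p` as a sequence indexed by `ℕ`, constant from `p.n` on. -/
def _root_.GPath.node {A : V → V → Prop} (p : GPath A x y) (i : ℕ) : V :=
  p.f ⟨min i p.n, by omega⟩

lemma _root_.GPath.node_of_le {A : V → V → Prop} (p : GPath A x y) {i : ℕ} (hi : i ≤ p.n) :
    p.node i = p.f ⟨i, by omega⟩ := by
  simp [GPath.node, hi]

lemma _root_.GPath.not_blocked_iff {A : V → V → Prop} (p : GPath A x y) :
    ¬ p.Blocked D S ↔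
      ∀ i, i + 1 < p.n → D.ActiveAt S (p.node i) (p.node (i + 1)) (p.node (i + 2)) := by
  have hcollider (i : ℕ) (hi : i + 1 < p.n) : p.ColliderAt D.edge (i + 1) ↔
      D.edge (p.node i) (p.node (i + 1)) ∧ D.edge (p.node (i + 2)) (p.node (i + 1)) := by
    rw [p.node_of_le (by omega), p.node_of_le (by omega), p.node_of_le (by omega)]
    exact ⟨fun ⟨_, _, h⟩ => h, fun h => ⟨by omega, hi, h⟩⟩
  constructor
  · intro hp i hi
    rw [ActiveAt, ← hcollider i hi, p.node_of_le hi.le]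
    refine ⟨fun hc => ?_, fun hc hS => hp ⟨i + 1, by omega, hi, .inl ⟨hc, hS⟩⟩⟩
    by_contra hd
    exact hp ⟨i + 1, by omega, hi, .inr ⟨hc, fun d hvd hdS => hd ⟨d, hdS, hvd⟩⟩⟩
  · rintro hp ⟨_ | i, hpos, hi, hblock⟩
    · exact absurd hpos (lt_irrefl 0)
    have hactive := hp i hi
    rw [ActiveAt, ← hcollider i hi, p.node_of_le hi.le] at hactive
    rcases hblock with ⟨hc, hS⟩ | ⟨hc, hd⟩
    · exact hactive.2 hc hS
    · obtain ⟨d, hdS, hvd⟩ := hactive.1 hc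
      exact hd d hvd hdS

lemma not_dSep_iff_exists_activePath :
    ¬ D.dSep s t S ↔ ∃ f n, f 0 = s ∧ f n = t ∧ D.ActivePath S f n := by
  simp only [dSep, not_forall, GPath.not_blocked_iff]
  constructor
  · rintro ⟨p, hp⟩
    refine ⟨p.node, p.n, (p.node_of_le (Nat.zero_le _)).trans p.first,
      (p.node_of_le le_rfl).trans p.last, fun i hi j hj hij => ?_, fun i hi => ?_, hp⟩
    · rw [p.node_of_le hi, p.node_of_le hj] at hij
      exact congrArg Fin.val (p.inj hij)
    · rw [p.node_of_le hi.le, p.node_of_le hi]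
      exact p.adj ⟨i, hi⟩
  · rintro ⟨f, n, hs, ht, hf⟩
    let p : GPath D.Adj s t :=
      { n := n
        f := fun i => f i
        inj := fun i j hij => Fin.ext (hf.injOn (Fin.is_le i) (Fin.is_le j) hij)
        first := hs
        last := ht
        adj := fun i => hf.adj i i.isLt }
    refine ⟨p, fun i (hi : i + 1 < n) => ?_⟩
    have hnode {j : ℕ} (hj : j ≤ n) : p.node j = f j := p.node_of_le hj
    rw [hnode (by omega), hnode hi.le, hnode hi]
    exact hf.active i hi

end ActivePath

section BayesBall

/-- The direction in which a Bayes ball leaves a node: towards a child or towards a parent. -/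
inductive Heading
  | down
  | up

/-- A ball at `v` with the given heading may move along the edge between `v` and `w`. -/
def Heading.Edge (D : Dag V) : Heading → V → V → Prop
  | .down, v, w => D.edge v w
  | .up, v, w => D.edge w v

/-- Shachter's Bayes ball: a ball started at `s` can reach `v` and leave it with the given heading.
It traces walks rather than paths, and bounces off a collider only if the collider itself lies in
`S`: a collider with a proper descendant in `S` is passed by descending to `S` and climbing back.
So each rule only concerns a single edge. -/
inductive BayesBall (D : Dag V) (S : Set V) (s : V) : V → Heading → Prop
  | start (h : Heading) : BayesBall D S s s h
  | pass_down {v w : V} :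
      BayesBall D S s v .down → D.edge v w → w ∉ S → BayesBall D S s w .down
  | bounce {v w : V} : BayesBall D S s v .down → D.edge v w → w ∈ S → BayesBall D S s w .up
  | pass_up {v w : V} (h : Heading) :
      BayesBall D S s v .up → D.edge w v → w ∉ S → BayesBall D S s w h

lemma BayesBall.target_or_up_of_hasDescendantIn
    (hu : D.BayesBall (S \ {s, t}) s u .down) (huv : D.edge u v) (hv : D.HasDescendantIn S v) :
    D.BayesBall (S \ {s, t}) s t .down ∨ D.BayesBall (S \ {s, t}) s v .up := by
  obtain ⟨d, hdS, hvd⟩ := hv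
  induction hvd using Relation.ReflTransGen.head_induction_on generalizing u with
  | refl =>
    by_cases hds : d = s
    · exact .inr (hds ▸ .start .up)
    by_cases hdt : d = t
    · exact .inl (.pass_down hu (hdt ▸ huv) (by simp))
    · exact .inr (.bounce hu huv (by simp [hdS, hds, hdt]))
  | @head v w hvw _ ih =>
    by_cases hvS : v ∈ S \ {s, t}
    · exact .inr (.bounce hu huv hvS)
    · exact (ih (.pass_down hu huv hvS) hvw).imp_right fun hw => .pass_up .up hw hvw hvS

lemma ActivePath.bayesBall_target_or {f : ℕ → V} {n : ℕ} (hf : D.ActivePath S f n) (hs : f 0 = s)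
    {i : ℕ} (hi : i < n) :
    D.BayesBall (S \ {s, t}) s t .down ∨
      ∀ h : Heading, h.Edge D (f i) (f (i + 1)) → D.BayesBall (S \ {s, t}) s (f i) h := by
  induction i with
  | zero => exact .inr fun h _ => hs ▸ .start h
  | succ i ih =>
    refine or_iff_not_imp_left.2 fun ht => ?_
    have ih := (ih (by omega)).resolve_left ht
    have hactive := hf.active i hi
    rcases hf.adj i (by omega) with hin | hin
    · rintro (_ | _) hout
      · exact .pass_down (ih .down hin) hin
          fun hS => (activeAt_of_edge_right hout).1 hactive hS.1
      · exact ((ih .down hin).target_or_up_of_hasDescendantIn hin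
          ((activeAt_of_collider hin hout).1 hactive)).resolve_left ht
    · exact fun h _ => .pass_up h (ih .up hin) hin
        fun hS => (activeAt_of_edge_left hin).1 hactive hS.1

lemma ActivePath.bayesBall {f : ℕ → V} {n : ℕ} (hf : D.ActivePath S f n) (hs : f 0 = s)
    (ht : f n = t) : D.BayesBall (S \ {s, t}) s t .down := by
  rcases n with _ | n
  · exact (hs.symm.trans ht) ▸ .start .down
  by_contra hball
  have hlast := (hf.bayesBall_target_or hs n.lt_succ_self).resolve_left hball
  rw [ht] at hlast
  rcases hf.adj n n.lt_succ_self with h | h <;> rw [ht] at h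
  · exact hball (.pass_down (hlast .down h) h (by simp))
  · exact hball (.pass_up .down (hlast .up h) h (by simp))

lemma ActivePath.take {f : ℕ → V} {m n : ℕ} (hf : D.ActivePath S f n) (hmn : m ≤ n) :
    D.ActivePath S f m where
  injOn := hf.injOn.mono (Set.Iic_subset_Iic.2 hmn)
  adj i hi := hf.adj i (by omega)
  active i hi := hf.active i (by omega)

/-- The path `f 0, …, f n` may be continued with the given heading without being blocked at
`f n`. -/
def Continues (D : Dag V) (S : Set V) (f : ℕ → V) (n : ℕ) (h : Heading) : Prop :=
  ∀ m, n = m + 1 → ∀ w, h.Edge D (f n) w → D.ActiveAt S (f m) (f n) w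

lemma ActivePath.append {f : ℕ → V} {n : ℕ} (hf : D.ActivePath S f n)
    (hfw : ∀ i ≤ n, f i ≠ w) (hadj : D.Adj (f n) w)
    (hactive : ∀ m, n = m + 1 → D.ActiveAt S (f m) (f n) w) :
    D.ActivePath S (Function.update f (n + 1) w) (n + 1) := by
  have hold {i : ℕ} (hi : i ≤ n) : Function.update f (n + 1) w i = f i :=
    Function.update_of_ne (by omega) w f
  have hnew : Function.update f (n + 1) w (n + 1) = w := Function.update_self ..
  refine ⟨fun i hi j hj hij => ?_, fun i hi => ?_, fun i hi => ?_⟩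
  · rcases Nat.le_succ_iff.1 hi with hi | rfl <;> rcases Nat.le_succ_iff.1 hj with hj | rfl
    · exact hf.injOn hi hj (by rwa [hold hi, hold hj] at hij)
    · exact absurd (by rwa [hold hi, hnew] at hij) (hfw i hi)
    · exact absurd (by rwa [hold hj, hnew, eq_comm] at hij) (hfw j hj)
    · rfl
  · rcases Nat.lt_succ_iff_lt_or_eq.1 hi with hi | rfl
    · rw [hold hi.le, hold hi]
      exact hf.adj i hi
    · rwa [hold le_rfl, hnew]
  · rcases Nat.lt_succ_iff_lt_or_eq.1 hi with hi | rfl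
    · rw [hold (by omega), hold hi.le, hold hi]
      exact hf.active i hi
    · rw [hold (by omega), hold le_rfl, hnew]
      exact hactive i rfl

lemma ActivePath.exists_continues {f : ℕ → V} {n : ℕ} {h h' : Heading} (hf : D.ActivePath S f n)
    (hcont : D.Continues S f n h) (hw : h.Edge D (f n) w)
    (hnew : ∀ x, h'.Edge D w x → D.ActiveAt S (f n) w x)
    (hold : ∀ i, i + 1 < n → f (i + 1) = w → ∀ x, h'.Edge D w x → D.ActiveAt S (f i) w x) :
    ∃ g k, D.ActivePath S g k ∧ g 0 = f 0 ∧ g k = w ∧ D.Continues S g k h' := by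
  have hadj : D.Adj (f n) w := by
    cases h
    · exact .inl hw
    · exact .inr hw
  by_cases hfw : ∃ i ≤ n, f i = w
  · obtain ⟨i, hi, rfl⟩ := hfw
    have hin : i < n := hi.lt_of_ne fun hin => hadj.ne (congrArg f hin).symm
    refine ⟨f, i, hf.take hi, rfl, rfl, ?_⟩
    rintro m rfl
    exact hold m hin rfl
  · push Not at hfw
    refine ⟨_, n + 1, hf.append hfw hadj fun m hm => hcont m hm w hw, ?_, ?_, ?_⟩
    · exact Function.update_of_ne n.succ_ne_zero.symm w f
    · exact Function.update_self ..
    · rintro m hm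
      obtain rfl : n = m := by omega
      rw [Function.update_self, Function.update_of_ne (by omega)]
      exact hnew

lemma ActivePath.hasDescendantIn_of_edge {f : ℕ → V} {m n : ℕ} (hf : D.ActivePath S f n)
    (hlast : ∀ m, n = m + 1 → D.edge (f m) (f n) → D.HasDescendantIn S (f n))
    (hm : m < n) (hedge : D.edge (f m) (f (m + 1))) : D.HasDescendantIn S (f (m + 1)) := by
  induction hk : n - m generalizing m with
  | zero => omega
  | succ k ih =>
    rcases (Nat.succ_le_of_lt hm).eq_or_lt with rfl | hm'
    · exact hlast m rfl hedge
    rcases hf.adj (m + 1) hm' with h | h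
    · exact .of_edge h (ih hm' h (by omega))
    · exact (activeAt_of_collider hedge h).1 (hf.active m hm')

lemma BayesBall.exists_activePath {h : Heading} (hball : D.BayesBall S s v h) :
    ∃ f n, D.ActivePath S f n ∧ f 0 = s ∧ f n = v ∧ D.Continues S f n h := by
  induction hball with
  | start h =>
    refine ⟨fun _ => s, 0, ⟨?_, by simp, by simp⟩, rfl, rfl, by simp [Continues]⟩
    simp [Set.InjOn]
  | pass_down _ hvw hwS ih =>
    obtain ⟨f, n, hf, rfl, rfl, hcont⟩ := ih
    exact hf.exists_continues hcont hvw (fun x hx => (activeAt_of_edge_right hx).2 hwS)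
      fun i _ _ x hx => (activeAt_of_edge_right hx).2 hwS
  | bounce _ hvw hwS ih =>
    obtain ⟨f, n, hf, rfl, rfl, hcont⟩ := ih
    have hw : D.HasDescendantIn S _ := ⟨_, hwS, .refl⟩
    refine hf.exists_continues hcont hvw (fun x hx => (activeAt_of_collider hvw hx).2 hw) ?_
    rintro i hi rfl x hx
    have hcollider := not_imp_not.1 (hf.active i hi).2 hwS
    exact (activeAt_of_collider hcollider.1 hx).2 hw
  | pass_up h _ hwv hwS ih =>
    obtain ⟨f, n, hf, rfl, rfl, hcont⟩ := ih
    refine hf.exists_continues hcont hwv (fun x _ => (activeAt_of_edge_left hwv).2 hwS) ?_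
    rintro i hi rfl x hx
    rcases hf.adj i (by omega) with hin | hin
    · cases h
      · exact (activeAt_of_edge_right hx).2 hwS
      · refine (activeAt_of_collider hin hx).2 (hf.hasDescendantIn_of_edge ?_ (by omega) hin)
        exact fun m hm h => (activeAt_of_collider h hwv).1 (hcont m hm _ hwv)
    · exact (activeAt_of_edge_left hin).2 hwS

theorem not_dSep_iff_bayesBall :
    ¬ D.dSep s t S ↔ D.BayesBall (S \ {s, t}) s t .down := by
  rw [not_dSep_iff_exists_activePath]
  constructor
  · rintro ⟨f, n, hs, ht, hf⟩
    exact hf.bayesBall hs ht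
  · intro hball
    obtain ⟨f, n, hf, rfl, rfl, -⟩ := hball.exists_activePath
    refine ⟨f, n, rfl, rfl, hf.injOn, hf.adj, fun i hi => ?_⟩
    obtain ⟨hcollider, hother⟩ := hf.active i hi
    refine ⟨fun hc => (hcollider hc).imp fun d hd => ⟨hd.1.1, hd.2⟩, fun hc hS => ?_⟩
    refine hother hc ⟨hS, ?_⟩
    rintro (h | h)
    · have := hf.injOn (Set.mem_Iic.2 hi.le) (Set.mem_Iic.2 n.zero_le) h
      omega
    · have := hf.injOn (Set.mem_Iic.2 hi.le) (Set.mem_Iic.2 le_rfl) h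
      omega

lemma not_dSep_of_adj (h : D.Adj a b) : ¬ D.dSep a b S := by
  refine not_dSep_iff_bayesBall.2 ?_
  rcases h with h | h
  · exact .pass_down (.start _) h (by simp)
  · exact .pass_up _ (.start _) h (by simp)

lemma not_dSep_of_not_collider (hac : D.Adj a c) (hbc : D.Adj b c)
    (hc : ¬ (D.edge a c ∧ D.edge b c)) (hcS : c ∉ S) : ¬ D.dSep a b S := by
  have hcS' : c ∉ S \ {a, b} := fun h => hcS h.1
  refine not_dSep_iff_bayesBall.2 ?_
  rcases hac with hac | hca
  · have hcb : D.edge c b := hbc.resolve_left fun hbc => hc ⟨hac, hbc⟩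
    exact .pass_down (.pass_down (.start _) hac hcS') hcb (by simp)
  · rcases hbc with hbc | hcb
    · exact .pass_up _ (.pass_up .up (.start _) hca hcS') hbc (by simp)
    · exact .pass_down (.pass_up .down (.start _) hca hcS') hcb (by simp)

lemma dSep_pa (hab : ¬ D.Adj a b) (hanc : ¬ D.Anc a b) : D.dSep a b (D.Pa a) := by
  by_contra h
  have invariant {v : V} {h : Heading} (hball : D.BayesBall (D.Pa a \ {a, b}) a v h) :
      D.Anc a v ∧ (h = .up → v = a) := by
    induction hball with
    | start => exact ⟨.refl, fun _ => rfl⟩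
    | pass_down _ hvw _ ih => exact ⟨ih.1.tail hvw, by simp⟩
    | bounce _ hvw hw ih => exact absurd (ih.1.tail hvw) (D.acyclic _ _ hw.1)
    | @pass_up v w _ _ hwv hw ih =>
      obtain rfl := ih.2 rfl
      have hwb : w ≠ b := by
        rintro rfl
        exact hab (.inr hwv)
      exact absurd ⟨hwv, by simp [hwv.ne, hwb]⟩ hw
  exact hanc (invariant (not_dSep_iff_bayesBall.1 h)).1

end BayesBall

section CoveredReversal

/-- `D'` arises from `D` by reversing the covered edge `x → y`, that is, an edge such that `x` and
`y` have the same parents apart from `x` itself. -/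
structure CoveredReversal (D D' : Dag V) (x y : V) : Prop where
  edge : D.edge x y
  edge_iff : ∀ a b, D'.edge a b ↔ (a = y ∧ b = x) ∨ (D.edge a b ∧ ¬ (a = x ∧ b = y))
  covered : ∀ p, p ≠ x → (D.edge p x ↔ D.edge p y)

namespace CoveredReversal

lemma reversed (h : CoveredReversal D D' x y) : D'.edge y x :=
  (h.edge_iff y x).2 (.inl ⟨rfl, rfl⟩)

lemma edge_of_edge (h : CoveredReversal D D' x y) (hab : D.edge a b) (hne : ¬ (a = x ∧ b = y)) :
    D'.edge a b :=
  (h.edge_iff a b).2 (.inr ⟨hab, hne⟩)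

lemma symm (h : CoveredReversal D D' x y) : CoveredReversal D' D y x where
  edge := h.reversed
  edge_iff a b := by
    have hxy := h.edge
    have hyx := hxy.asymm
    rw [h.edge_iff]
    by_cases hab : a = x ∧ b = y
    · simp [hab, hxy]
    by_cases hba : a = y ∧ b = x
    · simp [hba, hyx, hxy.ne.symm]
    · simp [hab, hba]
  covered p hpy := by
    have hx : x ≠ y := h.edge.ne
    by_cases hpx : p = x
    · simp [h.edge_iff, hpx, hx, hx.symm, not_edge_self]
    · simp [h.edge_iff, hpx, hpy, hx, h.covered p hpx]

lemma edge_both_of_edge_left (h : CoveredReversal D D' x y) (hp : D.edge p x) :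
    D'.edge p x ∧ D'.edge p y :=
  ⟨h.edge_of_edge hp fun hpx => hp.ne hpx.1,
    h.edge_of_edge ((h.covered p hp.ne).1 hp) fun hpx => hp.ne hpx.1⟩

lemma edge_both_of_edge_right (h : CoveredReversal D D' x y) (hp : D.edge p y) (hpx : p ≠ x) :
    D'.edge p x ∧ D'.edge p y :=
  h.edge_both_of_edge_left ((h.covered p hpx).2 hp)

end CoveredReversal

/-- What a Bayes ball of `D'` can do when a Bayes ball of `D` is at `v` with the given heading, `D'`
being `D` with the covered edge `x → y` reversed. Climbing from `x` and climbing from `y` lead to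
the same parents, so these two states need not be told apart. -/
def ReversalShadow (D' : Dag V) (S : Set V) (s x y v : V) : Heading → Prop
  | .down => D'.BayesBall S s v .down ∧ (v = x →
      (y ∉ S → D'.BayesBall S s y .down) ∧
      (y ∈ S → D'.BayesBall S s x .up ∨ D'.BayesBall S s y .up))
  | .up => (v ≠ x → v ≠ y → D'.BayesBall S s v .up) ∧
      (v = x ∨ v = y → D'.BayesBall S s x .up ∨ D'.BayesBall S s y .up) ∧
      (v = y → (x ∉ S → D'.BayesBall S s x .down) ∧ (y ∉ S → D'.BayesBall S s y .down))

namespace ReversalShadow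

lemma down_of_ne (hv : D'.BayesBall S s v .down) (hvx : v ≠ x) :
    D'.ReversalShadow S s x y v .down :=
  ⟨hv, fun h => absurd h hvx⟩

lemma up_of_ne (hv : D'.BayesBall S s v .up) (hvy : v ≠ y) :
    D'.ReversalShadow S s x y v .up := by
  refine ⟨fun _ _ => hv, ?_, fun h => absurd h hvy⟩
  rintro (rfl | rfl)
  · exact .inl hv
  · exact .inr hv

lemma of_forall (hyx : D'.edge y x) (hw : ∀ h, D'.BayesBall S s w h) (h : Heading) :
    D'.ReversalShadow S s x y w h := by
  cases h with
  | down =>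
    refine ⟨hw _, ?_⟩
    rintro rfl
    exact ⟨fun hy => .pass_up _ (hw _) hyx hy, fun _ => .inl (hw _)⟩
  | up =>
    by_cases hwy : w = y
    · subst hwy
      exact ⟨fun _ h => absurd rfl h, fun _ => .inr (hw _),
        fun _ => ⟨fun hx => .pass_down (hw _) hyx hx, fun _ => hw _⟩⟩
    · exact up_of_ne (hw _) hwy

lemma pass_down (hrev : CoveredReversal D D' x y) (hv : D'.ReversalShadow S s x y v .down)
    (hvw : D.edge v w) (hwS : w ∉ S) : D'.ReversalShadow S s x y w .down := by
  by_cases hwx : w = x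
  · subst hwx
    obtain ⟨hvx, hvy⟩ := hrev.edge_both_of_edge_left hvw
    exact ⟨.pass_down hv.1 hvx hwS,
      fun _ => ⟨fun hy => .pass_down hv.1 hvy hy, fun hy => .inr (.bounce hv.1 hvy hy)⟩⟩
  · refine down_of_ne ?_ hwx
    by_cases hvxwy : v = x ∧ w = y
    · obtain ⟨rfl, rfl⟩ := hvxwy
      exact (hv.2 rfl).1 hwS
    · exact .pass_down hv.1 (hrev.edge_of_edge hvw hvxwy) hwS

lemma bounce (hrev : CoveredReversal D D' x y) (hv : D'.ReversalShadow S s x y v .down)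
    (hvw : D.edge v w) (hwS : w ∈ S) : D'.ReversalShadow S s x y w .up := by
  by_cases hwy : w = y
  · subst hwy
    by_cases hvx : v = x
    · subst hvx
      exact ⟨fun _ h => absurd rfl h, fun _ => (hv.2 rfl).2 hwS,
        fun _ => ⟨fun _ => hv.1, fun h => absurd hwS h⟩⟩
    · obtain ⟨hvx, hvy⟩ := hrev.edge_both_of_edge_right hvw hvx
      exact ⟨fun _ h => absurd rfl h, fun _ => .inr (.bounce hv.1 hvy hwS),
        fun _ => ⟨fun hx => .pass_down hv.1 hvx hx, fun h => absurd hwS h⟩⟩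
  · exact up_of_ne (.bounce hv.1 (hrev.edge_of_edge hvw fun h => hwy h.2) hwS) hwy

lemma pass_up (hrev : CoveredReversal D D' x y) (hv : D'.ReversalShadow S s x y v .up)
    (hwv : D.edge w v) (hwS : w ∉ S) (h : Heading) : D'.ReversalShadow S s x y w h := by
  by_cases hwxy : w = x ∧ v = y
  · obtain ⟨rfl, rfl⟩ := hwxy
    cases h with
    | down => exact ⟨(hv.2.2 rfl).1 hwS, fun _ => ⟨(hv.2.2 rfl).2, fun _ => hv.2.1 (.inr rfl)⟩⟩
    | up =>
      exact ⟨fun h => absurd rfl h, fun _ => hv.2.1 (.inr rfl), fun h => absurd h hrev.edge.ne⟩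
  refine of_forall hrev.reversed (fun h => ?_) h
  by_cases hvxy : v = x ∨ v = y
  · have hw : D'.edge w x ∧ D'.edge w y := by
      rcases hvxy with rfl | rfl
      · exact hrev.edge_both_of_edge_left hwv
      · exact hrev.edge_both_of_edge_right hwv fun hwx => hwxy ⟨hwx, rfl⟩
    rcases hv.2.1 hvxy with hx | hy
    · exact .pass_up h hx hw.1 hwS
    · exact .pass_up h hy hw.2 hwS
  · rw [not_or] at hvxy
    exact .pass_up h (hv.1 hvxy.1 hvxy.2) (hrev.edge_of_edge hwv hwxy) hwS

end ReversalShadow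

lemma BayesBall.reversalShadow {h : Heading} (hball : D.BayesBall S s v h)
    (hrev : CoveredReversal D D' x y) : D'.ReversalShadow S s x y v h := by
  induction hball with
  | start h => exact .of_forall hrev.reversed .start h
  | pass_down _ hvw hw ih => exact ih.pass_down hrev hvw hw
  | bounce _ hvw hw ih => exact ih.bounce hrev hvw hw
  | pass_up h _ hwv hw ih => exact ih.pass_up hrev hwv hw h

theorem CoveredReversal.mEquiv (h : CoveredReversal D D' x y) : D.MEquiv D' := by
  intro s t S
  rw [← not_iff_not, not_dSep_iff_bayesBall, not_dSep_iff_bayesBall]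
  exact ⟨fun hball => (hball.reversalShadow h).1, fun hball => (hball.reversalShadow h.symm).1⟩

lemma exists_coveredReversal (hxy : D.edge x y)
    (hcov : ∀ p, p ≠ x → (D.edge p x ↔ D.edge p y)) : ∃ D', CoveredReversal D D' x y := by
  classical
  let r (v : V) : Set V ×ₗ ℕ :=
    toLex (if v = y then D.ancestors x else D.ancestors v, if v = x then 1 else 0)
  refine ⟨.ofRank (fun a b => (a = y ∧ b = x) ∨ (D.edge a b ∧ ¬ (a = x ∧ b = y))) r ?_,
    hxy, fun _ _ => Iff.rfl, hcov⟩
  rintro a b (⟨rfl, rfl⟩ | ⟨hab, hne⟩)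
  · simp [r, Prod.Lex.toLex_lt_toLex, hxy.ne, hxy.ne.symm]
  refine Prod.Lex.toLex_lt_toLex.2 (.inl ?_)
  by_cases hby : b = y
  · subst hby
    have hax : D.edge a x := (hcov a fun hax => hne ⟨hax, rfl⟩).2 hab
    simpa [hab.ne] using hax.ancestors_lt
  · by_cases hay : a = y
    · subst hay
      simpa [hby] using hxy.ancestors_lt.trans hab.ancestors_lt
    · simpa [hay, hby] using hab.ancestors_lt

end CoveredReversal

section VermaPearl

/-- The unshielded collider (v-structure) `a → c ← b`. -/
structure Immorality (D : Dag V) (a c b : V) : Prop where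
  edge_left : D.edge a c
  edge_right : D.edge b c
  ne : a ≠ b
  not_adj : ¬ D.Adj a b

lemma Immorality.symm (h : D.Immorality a c b) : D.Immorality b c a :=
  ⟨h.edge_right, h.edge_left, h.ne.symm, fun hba => h.not_adj hba.symm⟩

/-- `D` and `D'` have the same skeleton and the same immoralities, the Verma–Pearl criterion for
Markov equivalence. -/
structure SamePattern (D D' : Dag V) : Prop where
  adj_iff : ∀ a b, D.Adj a b ↔ D'.Adj a b
  immorality_iff : ∀ a c b, D.Immorality a c b ↔ D'.Immorality a c b

namespace SamePattern

lemma refl (D : Dag V) : SamePattern D D := ⟨fun _ _ => Iff.rfl, fun _ _ _ => Iff.rfl⟩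

lemma symm (h : SamePattern D D') : SamePattern D' D :=
  ⟨fun a b => (h.adj_iff a b).symm, fun a c b => (h.immorality_iff a c b).symm⟩

lemma trans (h : SamePattern D D') (h' : SamePattern D' D'') : SamePattern D D'' :=
  ⟨fun a b => (h.adj_iff a b).trans (h'.adj_iff a b),
    fun a c b => (h.immorality_iff a c b).trans (h'.immorality_iff a c b)⟩

lemma edge_or_edge (h : SamePattern D D') (hab : D.edge a b) : D'.edge a b ∨ D'.edge b a :=
  (h.adj_iff a b).1 hab.adj

lemma eq_of_forall_edge (h : SamePattern D D') (hedge : ∀ a b, D.edge a b → ¬ D'.edge b a) :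
    D = D' := by
  have hD : D.edge = D'.edge := by
    ext a b
    exact ⟨fun hab => (h.edge_or_edge hab).resolve_right (hedge a b hab),
      fun hab => (h.symm.edge_or_edge hab).resolve_right fun hba => hedge b a hba hab⟩
  cases D
  cases D'
  cases hD
  rfl

/- Chickering's choice: `y` is `D`-minimal among the heads of the edges on which `D` and `D'`
disagree, and then `x` is `D`-maximal among the tails of such edges into `y`. -/
lemma exists_covered [Finite V] (h : SamePattern D D') (huw : D.edge u w) (hwu : D'.edge w u) :
    ∃ x y, D.edge x y ∧ D'.edge y x ∧ ∀ p, p ≠ x → (D.edge p x ↔ D.edge p y) := by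
  obtain ⟨y, ⟨x₀, hx₀⟩, hymin⟩ := D.wellFounded_edge.has_min
    {y | ∃ x, D.edge x y ∧ D'.edge y x} ⟨w, u, huw, hwu⟩
  obtain ⟨x, ⟨hxy, hyx⟩, hxmax⟩ := D.wellFounded_flip_edge.has_min
    {x | D.edge x y ∧ D'.edge y x} ⟨x₀, hx₀⟩
  have hagree {z a : V} (hzy : D.edge z y) (haz : D.edge a z) : D'.edge a z :=
    (h.edge_or_edge haz).resolve_right fun hza => hymin z ⟨a, haz, hza⟩ hzy
  refine ⟨x, y, hxy, hyx, fun p hpx => ⟨fun hp => ?_, fun hp => ?_⟩⟩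
  · by_contra hpy
    have hadj : ¬ D.Adj p y := fun hadj => hpy (hp.trans_of_adj hxy hadj)
    have hne : p ≠ y := by
      rintro rfl
      exact hxy.asymm hp
    have himm : D'.Immorality p x y :=
      ⟨hagree hxy hp, hyx, hne, fun hpy' => hadj ((h.adj_iff p y).2 hpy')⟩
    exact hxy.asymm ((h.immorality_iff p x y).2 himm).edge_right
  · by_contra hpx'
    by_cases hadj : D.Adj p x
    · have hxp : D.edge x p := hadj.resolve_left hpx'
      have hpy : D'.edge p y := (h.edge_or_edge hp).resolve_right fun hyp => hxmax p ⟨hp, hyp⟩ hxp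
      exact hyx.asymm ((hagree hp hxp).trans_of_adj hpy (.inr hyx))
    · exact hyx.asymm ((h.immorality_iff p y x).1 ⟨hp, hxy, hpx, hadj⟩).edge_right

end SamePattern

namespace CoveredReversal

lemma adj (h : CoveredReversal D D' x y) (hab : D.Adj a b) : D'.Adj a b := by
  have hedge {a b : V} (hab : D.edge a b) : D'.Adj a b := by
    by_cases hxy : a = x ∧ b = y
    · obtain ⟨rfl, rfl⟩ := hxy
      exact .inr h.reversed
    · exact .inl (h.edge_of_edge hab hxy)
  exact hab.elim hedge fun hba => (hedge hba).symm

lemma immorality (h : CoveredReversal D D' x y) (himm : D.Immorality a c b) :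
    D'.Immorality a c b := by
  have hedge {a b : V} (himm : D.Immorality a c b) : D'.edge a c := by
    refine h.edge_of_edge himm.edge_left ?_
    rintro ⟨rfl, rfl⟩
    exact himm.not_adj (.inr ((h.covered b himm.ne.symm).2 himm.edge_right))
  exact ⟨hedge himm, hedge himm.symm, himm.ne, fun hab => himm.not_adj (h.symm.adj hab)⟩

lemma samePattern (h : CoveredReversal D D' x y) : SamePattern D D' :=
  ⟨fun _ _ => ⟨h.adj, h.symm.adj⟩, fun _ _ _ => ⟨h.immorality, h.symm.immorality⟩⟩

end CoveredReversal

namespace MEquiv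

lemma refl (D : Dag V) : D.MEquiv D := fun _ _ _ => Iff.rfl

lemma symm (h : D.MEquiv D') : D'.MEquiv D := fun s t S => (h s t S).symm

lemma trans (h : D.MEquiv D') (h' : D'.MEquiv D'') : D.MEquiv D'' :=
  fun s t S => (h s t S).trans (h' s t S)

end MEquiv

theorem SamePattern.mEquiv [Finite V] (h : SamePattern D D') : D.MEquiv D' := by
  induction hn : {e : V × V | D.edge e.1 e.2 ∧ D'.edge e.2 e.1}.ncard
    using Nat.strong_induction_on generalizing D with
  | _ n ih =>
    by_cases hagree : ∀ a b, D.edge a b → ¬ D'.edge b a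
    · obtain rfl := h.eq_of_forall_edge hagree
      exact .refl D
    push Not at hagree
    obtain ⟨u, w, huw, hwu⟩ := hagree
    obtain ⟨x, y, hxy, hyx, hcov⟩ := h.exists_covered huw hwu
    obtain ⟨E, hE⟩ := exists_coveredReversal hxy hcov
    refine hE.mEquiv.trans (ih _ ?_ (hE.samePattern.symm.trans h) rfl)
    rw [← hn]
    refine Set.ncard_lt_ncard ⟨?_, fun hsub => ?_⟩ (Set.toFinite _)
    · rintro ⟨a, b⟩ ⟨hab, hba⟩
      rcases (hE.edge_iff a b).1 hab with ⟨rfl, rfl⟩ | ⟨hab, -⟩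
      · exact absurd hba hyx.asymm
      · exact ⟨hab, hba⟩
    · have hxyE : D.edge x y ∧ D'.edge y x := ⟨hxy, hyx⟩
      exact hE.reversed.asymm (hsub (show (x, y) ∈ _ from hxyE)).1

lemma MEquiv.adj (h : D.MEquiv D') (hab : D.Adj a b) : D'.Adj a b := by
  by_contra hab'
  by_cases hanc : D'.Anc a b
  · have hba : ¬ D'.Anc b a := fun hba => hab.ne (hanc.antisymm hba)
    exact not_dSep_of_adj hab.symm ((h b a _).2 (dSep_pa (fun hba => hab' hba.symm) hba))
  · exact not_dSep_of_adj hab ((h a b _).2 (dSep_pa hab' hanc))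

lemma MEquiv.immorality (h : D.MEquiv D') (himm : D.Immorality a c b) : D'.Immorality a c b := by
  wlog hanc : ¬ D.Anc a b generalizing a b
  · refine (this himm.symm fun hba => ?_).symm
    exact himm.ne ((not_not.1 hanc).antisymm hba)
  have hsep : D'.dSep a b (D.Pa a) := (h a b _).1 (dSep_pa himm.not_adj hanc)
  have hcollider : D'.edge a c ∧ D'.edge b c := by
    by_contra hc
    exact not_dSep_of_not_collider (h.adj himm.edge_left.adj) (h.adj himm.edge_right.adj) hc
      himm.edge_left.asymm hsep
  exact ⟨hcollider.1, hcollider.2, himm.ne, fun hab => himm.not_adj (h.symm.adj hab)⟩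

theorem mEquiv_iff_samePattern [Finite V] : D.MEquiv D' ↔ SamePattern D D' :=
  ⟨fun h => ⟨fun _ _ => ⟨h.adj, h.symm.adj⟩, fun _ _ _ => ⟨h.immorality, h.symm.immorality⟩⟩,
    SamePattern.mEquiv⟩

end VermaPearl

section Forced

/-- The edges forced in the Markov equivalence class of `D`: the closure of its immoralities under
Meek's orientation rules. The rules are read off `D` itself: the premise `D.edge a b` of
`of_not_adj`, and the exclusion of the immorality `e → a ← f` in `of_fork`, hold or fail in all
members of the class at once. -/
inductive Forced (D : Dag V) : V → V → Prop
  | of_immorality {a b c : V} : D.Immorality a c b → Forced D a c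
  | of_not_adj {d a b : V} : Forced D d a → D.edge a b → d ≠ b → ¬ D.Adj d b → Forced D a b
  | of_chain {a d b : V} : Forced D a d → Forced D d b → D.Adj a b → Forced D a b
  | of_fork {a b e f : V} : D.Adj a e → D.Adj a f → D.Adj a b → Forced D e b → Forced D f b →
      e ≠ f → ¬ D.Adj e f → ¬ D.Immorality e a f → Forced D a b

lemma Forced.edge_of_samePattern (hab : D.Forced a b) (h : SamePattern D D') : D'.edge a b := by
  induction hab with
  | of_immorality himm => exact ((h.immorality_iff _ _ _).1 himm).edge_left
  | @of_not_adj d a b _ hab hne hdb ih =>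
    refine (h.edge_or_edge hab).resolve_right fun hba => hab.asymm ?_
    exact ((h.immorality_iff d a b).2
      ⟨ih, hba, hne, fun hdb' => hdb ((h.adj_iff d b).2 hdb')⟩).edge_right
  | of_chain _ _ hab ihd ihb => exact ihd.trans_of_adj ihb ((h.adj_iff _ _).1 hab)
  | @of_fork a b e f hae haf hab _ _ hne hef himm ihe ihf =>
    refine ((h.adj_iff a b).1 hab).resolve_right fun hba => himm ?_
    exact (h.immorality_iff e a f).2
      ⟨ihe.trans_of_adj hba ((h.adj_iff a e).1 hae).symm,
        ihf.trans_of_adj hba ((h.adj_iff a f).1 haf).symm,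
        hne, fun hef' => hef ((h.adj_iff e f).2 hef')⟩

lemma Forced.edge (h : D.Forced a b) : D.edge a b := h.edge_of_samePattern (.refl D)

lemma Forced.adj (h : D.Forced a b) : D.Adj a b := h.edge.adj

lemma Forced.or_of_not_adj (hda : D.Forced d a) (hab : D.Adj a b) (hne : d ≠ b)
    (hdb : ¬ D.Adj d b) : D.Forced a b ∨ D.Forced b a := by
  rcases hab with hab | hba
  · exact .inl (.of_not_adj hda hab hne hdb)
  · exact .inr (.of_immorality (Immorality.symm ⟨hda.edge, hba, hne, hdb⟩))

/-- The edge between `a` and `b` is not forced in either direction. -/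
structure Unforced (D : Dag V) (a b : V) : Prop where
  adj : D.Adj a b
  not_forced : ¬ D.Forced a b
  not_forced_symm : ¬ D.Forced b a

lemma Unforced.symm (h : D.Unforced a b) : D.Unforced b a :=
  ⟨h.adj.symm, h.not_forced_symm, h.not_forced⟩

lemma Forced.adj_of_unforced (hab : D.Forced a b) (hbc : D.Unforced b c) : D.Adj a c := by
  by_contra hac
  have hne : a ≠ c := by
    rintro rfl
    exact hbc.not_forced_symm hab
  exact (hab.or_of_not_adj hbc.adj hne hac).elim hbc.not_forced hbc.not_forced_symm

lemma Forced.of_unforced_of_not_adj (hab : D.Forced a b) (hdb : D.Forced d b) (hne : a ≠ d)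
    (had : ¬ D.Adj a d) (hbc : D.Unforced b c) : D.Forced a c ∧ D.Forced d c := by
  by_cases himm : D.Immorality a c d
  · exact ⟨.of_immorality himm, .of_immorality himm.symm⟩
  · exact absurd (.of_fork (hab.adj_of_unforced hbc).symm (hdb.adj_of_unforced hbc).symm
      hbc.adj.symm hab hdb hne had himm) hbc.not_forced_symm

theorem Forced.trans_unforced [Finite V] (hab : D.Forced a b) (hbc : D.Unforced b c) :
    D.Forced a c := by
  induction b using D.wellFounded_edge.induction generalizing a c with
  | _ b ih =>
  have hac : D.Adj a c := hab.adj_of_unforced hbc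
  cases id hab with
  | of_immorality himm =>
    exact (hab.of_unforced_of_not_adj (.of_immorality himm.symm) himm.ne himm.not_adj hbc).1
  | @of_not_adj d _ _ hda hab' hne hdb =>
    by_contra hac'
    have hca : ¬ D.Forced c a := fun hca =>
      hbc.not_forced_symm (.of_chain hca hab hbc.adj.symm)
    have hdc : D.Forced d c := ih a hab' hda ⟨hac, hac', hca⟩
    exact (hdc.or_of_not_adj hbc.adj.symm hne hdb).elim hbc.not_forced_symm hbc.not_forced
  | @of_chain _ d _ had hdb _ =>
    by_cases hdc : D.Forced d c
    · exact .of_chain had hdc hac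
    have hcd : ¬ D.Forced c d := fun hcd => hbc.not_forced_symm (.of_chain hcd hdb hbc.adj.symm)
    exact ih d hdb.edge had ⟨hdb.adj_of_unforced hbc, hdc, hcd⟩
  | of_fork hae haf _ heb hfb hne hef himm =>
    obtain ⟨hec, hfc⟩ := heb.of_unforced_of_not_adj hfb hne hef hbc
    exact .of_fork hae haf hac hec hfc hne hef himm

end Forced

section PerfectOrdering

/-- The rank `r` orders `T` so that the earlier neighbours of each vertex form a clique; its reverse
is a perfect elimination ordering of the subgraph of `G` induced by `T`. -/
structure PerfectOrdering (G : SimpleGraph V) (T : Finset V) (r : V → ℕ) : Prop where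
  injOn : Set.InjOn r T
  isClique : ∀ v ∈ T, G.IsClique {u | u ∈ T ∧ G.Adj u v ∧ r u < r v}

variable {G : SimpleGraph V} {C T : Finset V} {r : V → ℕ} {z : V}

namespace PerfectOrdering

lemma exists_append [DecidableEq V] (hr : PerfectOrdering G T r) (hz : z ∉ T)
    (hclique : G.IsClique {u | u ∈ T ∧ G.Adj u z}) :
    ∃ M, (∀ v ∈ T, r v < M) ∧ PerfectOrdering G (insert z T) (Function.update r z M) := by
  have hM {v : V} (hv : v ∈ T) : r v < T.sup r + 1 := Nat.lt_succ_of_le (Finset.le_sup hv)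
  have hold {v : V} (hv : v ∈ T) : Function.update r z (T.sup r + 1) v = r v :=
    Function.update_of_ne (ne_of_mem_of_not_mem hv hz) _ r
  refine ⟨T.sup r + 1, fun v hv => hM hv, ?_, fun v hv => ?_⟩
  · rw [Finset.coe_insert, Set.injOn_insert hz]
    refine ⟨hr.injOn.congr fun v hv => (hold hv).symm, ?_⟩
    rintro ⟨v, hv, hvz⟩
    rw [hold hv, Function.update_self] at hvz
    exact (hM hv).ne hvz
  · rcases Finset.mem_insert.1 hv with rfl | hvT
    · refine hclique.subset ?_
      rintro u ⟨hu, huz, -⟩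
      exact ⟨Finset.mem_of_mem_insert_of_ne hu huz.ne, huz⟩
    · refine (hr.isClique v hvT).subset ?_
      rintro u ⟨hu, huv, hlt⟩
      rcases Finset.mem_insert.1 hu with rfl | huT
      · rw [Function.update_self, hold hvT] at hlt
        exact absurd (hM hvT) hlt.le.not_gt
      · exact ⟨huT, huv, by rwa [hold huT, hold hvT] at hlt⟩

lemma exists_move_to_front (hr : PerfectOrdering G T r) (hC : G.IsClique C)
    (hclique : ∀ v ∈ T, v ∉ C → G.IsClique {u | u ∈ T ∧ G.Adj u v ∧ (u ∈ C ∨ r u < r v)}) :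
    ∃ r', PerfectOrdering G T r' ∧ ∀ u ∈ C, ∀ v ∉ C, r' u < r' v := by
  classical
  let r' (v : V) : ℕ := if v ∈ C then r v else C.sup r + 1 + r v
  have hfront {u v : V} (hu : u ∈ C) (hv : v ∉ C) : r' u < r' v := by
    have := Finset.le_sup (f := r) hu
    simp only [r', hu, hv, if_true, if_false]
    omega
  have hsame {u v : V} (huv : u ∈ C ↔ v ∈ C) : r' u < r' v ↔ r u < r v := by
    simp only [r', huv]
    split_ifs <;> omega
  refine ⟨r', ⟨fun u hu v hv huv => ?_, fun v hv => ?_⟩, fun u hu v hv => hfront hu hv⟩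
  · by_cases huC : u ∈ C ↔ v ∈ C
    · exact hr.injOn hu hv (le_antisymm (not_lt.1 fun h => huv.not_gt ((hsame huC.symm).2 h))
        (not_lt.1 fun h => huv.not_lt ((hsame huC).2 h)))
    · by_cases hu : u ∈ C
      · exact absurd huv (hfront hu (by tauto)).ne
      · exact absurd huv (hfront (by tauto) hu).ne'
  · by_cases hvC : v ∈ C
    · refine hC.subset ?_
      rintro u ⟨-, -, hlt⟩
      by_contra hu
      exact hlt.not_gt (hfront hvC hu)
    · refine (hclique v hv hvC).subset ?_
      rintro u ⟨hu, huv, hlt⟩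
      exact ⟨hu, huv, or_iff_not_imp_left.2 fun huC => (hsame (by simp [huC, hvC])).1 hlt⟩

/- `C` consists of `z` and some of its neighbours, so if all neighbours of `z` come first, then `z`
can be appended and `C` moved to the front. -/
lemma exists_insert_of_mem [DecidableEq V] (hr : PerfectOrdering G T r) (hzT : z ∉ T)
    (hz : G.IsClique {u | u ∈ T ∧ G.Adj u z})
    (hinit : ∀ u ∈ T, ∀ v ∈ T, G.Adj u z → ¬ G.Adj v z → r u < r v)
    (hC : G.IsClique C) (hCT : C ⊆ insert z T) (hzC : z ∈ C) :
    ∃ r', PerfectOrdering G (insert z T) r' ∧ ∀ u ∈ C, ∀ v ∉ C, r' u < r' v := by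
  obtain ⟨M, -, hrM⟩ := hr.exists_append hzT hz
  refine hrM.exists_move_to_front hC fun v hv hvC => ?_
  have hold {v : V} (hv : v ∈ T) : Function.update r z M v = r v :=
    Function.update_of_ne (ne_of_mem_of_not_mem hv hzT) _ r
  have hvT : v ∈ T := Finset.mem_of_mem_insert_of_ne hv (ne_of_mem_of_not_mem hzC hvC).symm
  by_cases hvz : G.Adj v z
  · refine (hz.insert fun u hu _ => hu.2.symm).subset ?_
    rintro u ⟨hu, -, hlt⟩
    rcases Finset.mem_insert.1 hu with rfl | huT
    · exact Set.mem_insert u _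
    refine .inr ⟨huT, ?_⟩
    rcases hlt with huC | hlt
    · exact hC huC hzC (ne_of_mem_of_not_mem huT hzT)
    · rw [hold huT, hold hvT] at hlt
      by_contra huz
      exact hlt.not_gt (hinit v hvT u huT hvz huz)
  · refine (hr.isClique v hvT).subset ?_
    rintro u ⟨hu, huv, hlt⟩
    have huz : u ≠ z := by
      rintro rfl
      exact hvz huv.symm
    have huT : u ∈ T := Finset.mem_of_mem_insert_of_ne hu huz
    refine ⟨huT, huv, ?_⟩
    rcases hlt with huC | hlt
    · exact hinit u huT v hvT (hC huC hzC huz) hvz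
    · rwa [hold huT, hold hvT] at hlt

lemma exists_insert_of_notMem [DecidableEq V] (hr : PerfectOrdering G T r) (hzT : z ∉ T)
    (hz : G.IsClique {u | u ∈ T ∧ G.Adj u z}) (hCT : C ⊆ T)
    (hinit : ∀ u ∈ C, ∀ v ∈ T, v ∉ C → r u < r v) :
    ∃ r', PerfectOrdering G (insert z T) r' ∧
      ∀ u ∈ C, ∀ v ∈ insert z T, v ∉ C → r' u < r' v := by
  obtain ⟨M, hM, hrM⟩ := hr.exists_append hzT hz
  refine ⟨_, hrM, fun u hu v hv hvC => ?_⟩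
  rw [Function.update_of_ne (ne_of_mem_of_not_mem (hCT hu) hzT)]
  rcases Finset.mem_insert.1 hv with rfl | hvT
  · rw [Function.update_self]
    exact hM u (hCT hu)
  · rw [Function.update_of_ne (ne_of_mem_of_not_mem hvT hzT)]
    exact hinit u hu v hvT hvC

end PerfectOrdering

theorem exists_perfectOrdering
    (hG : ∀ T : Finset V, T.Nonempty → ∃ z ∈ T, G.IsClique {u | u ∈ T ∧ G.Adj u z})
    (hCT : C ⊆ T) (hC : G.IsClique C) :
    ∃ r, PerfectOrdering G T r ∧ ∀ u ∈ C, ∀ v ∈ T, v ∉ C → r u < r v := by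
  classical
  induction T using Finset.strongInduction generalizing C with
  | H T ih =>
  rcases T.eq_empty_or_nonempty with rfl | hT
  · exact ⟨0, ⟨by simp, by simp⟩, by simp⟩
  obtain ⟨z, hzT, hz⟩ := hG T hT
  have hz' : G.IsClique {u | u ∈ T.erase z ∧ G.Adj u z} := by
    refine hz.subset ?_
    rintro u ⟨hu, huz⟩
    exact ⟨Finset.mem_of_mem_erase hu, huz⟩
  have hinsert : insert z (T.erase z) = T := Finset.insert_erase hzT
  by_cases hzC : z ∈ C
  · obtain ⟨r, hr, hinit⟩ := ih _ (Finset.erase_ssubset hzT)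
      (Finset.filter_subset (fun u => G.Adj u z) _) (by simpa using hz')
    obtain ⟨r', hr', hCr'⟩ := hr.exists_insert_of_mem (Finset.notMem_erase z T) hz'
      (fun u hu v hv huz hvz => hinit u (Finset.mem_filter.2 ⟨hu, huz⟩) v hv
        fun hv => hvz (Finset.mem_filter.1 hv).2) hC (hinsert.symm ▸ hCT) hzC
    exact ⟨r', hinsert ▸ hr', fun u hu v _ hvC => hCr' u hu v hvC⟩
  · have hCT' : C ⊆ T.erase z := Finset.subset_erase.2 ⟨hCT, hzC⟩
    obtain ⟨r, hr, hinit⟩ := ih _ (Finset.erase_ssubset hzT) hCT' hC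
    have hr' := hr.exists_insert_of_notMem (Finset.notMem_erase z T) hz' hCT' hinit
    rwa [hinsert] at hr'

end PerfectOrdering

section Reorientation

variable [Finite V]

/-- The graph of the unforced edges of `D`. -/
def unforcedGraph (D : Dag V) : SimpleGraph V where
  Adj := D.Unforced
  symm := ⟨fun _ _ => Unforced.symm⟩
  loopless := ⟨fun _ h => h.adj.ne rfl⟩

lemma Unforced.of_edge_of_edge (hac : D.Unforced a c) (hbc : D.Unforced b c) (heac : D.edge a c)
    (hebc : D.edge b c) (hne : a ≠ b) : D.Unforced a b where
  adj := by
    by_contra hab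
    exact hac.not_forced (.of_immorality ⟨heac, hebc, hne, hab⟩)
  not_forced hab := hac.not_forced (hab.trans_unforced hbc)
  not_forced_symm hba := hbc.not_forced (hba.trans_unforced hac)

lemma exists_isClique_unforcedGraph (D : Dag V) (T : Finset V) (hT : T.Nonempty) :
    ∃ z ∈ T, D.unforcedGraph.IsClique {u | u ∈ T ∧ D.unforcedGraph.Adj u z} := by
  obtain ⟨z, hzT, hz⟩ := D.wellFounded_flip_edge.has_min T hT
  refine ⟨z, hzT, ?_⟩
  rintro a ⟨haT, haz⟩ b ⟨hbT, hbz⟩ hne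
  exact Unforced.of_edge_of_edge haz hbz (haz.adj.resolve_right (hz a haT))
    (hbz.adj.resolve_right (hz b hbT)) hne

/-- The DAG with the forced edges of `D`, in which each unforced edge points towards its endpoint of
larger rank `r`. -/
def reorient (D : Dag V) (r : V → ℕ) : Dag V :=
  .ofRank (fun a b => D.Forced a b ∨ (D.Unforced a b ∧ r a < r b))
    (fun v => (toLex ({u | Relation.TransGen D.Forced u v}, r v) : Set V ×ₗ ℕ)) <| by
      rintro a b (hab | ⟨hab, hlt⟩) <;> rw [Prod.Lex.toLex_lt_toLex]
      · refine .inl ⟨fun u hu => hu.tail hab, fun hsub => ?_⟩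
        exact not_transGen_self (fun _ _ => Forced.edge) (hsub (Relation.TransGen.single hab))
      · refine .inr ⟨Set.ext fun u => ⟨fun hu => ?_, fun hu => ?_⟩, hlt⟩
        · exact transGen_of_transGen_of_forall (fun _ _ _ => Forced.trans_unforced) hu hab
        · exact transGen_of_transGen_of_forall (fun _ _ _ => Forced.trans_unforced) hu hab.symm

lemma adj_reorient_iff {r : V → ℕ} (hr : ∀ a b, D.Unforced a b → r a ≠ r b) :
    (D.reorient r).Adj a b ↔ D.Adj a b := by
  constructor
  · rintro ((h | h) | (h | h))
    exacts [h.adj, h.1.adj, h.adj.symm, h.1.adj.symm]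
  · intro hab
    by_cases hfab : D.Forced a b
    · exact .inl (.inl hfab)
    by_cases hfba : D.Forced b a
    · exact .inr (.inl hfba)
    have hu : D.Unforced a b := ⟨hab, hfab, hfba⟩
    exact (hr a b hu).lt_or_gt.imp (fun h => .inr ⟨hu, h⟩) fun h => .inr ⟨hu.symm, h⟩

lemma samePattern_reorient {r : V → ℕ} (hr : ∀ a b, D.Unforced a b → r a ≠ r b)
    (hclique : ∀ v, D.unforcedGraph.IsClique {u | D.Unforced u v ∧ r u < r v}) :
    SamePattern D (D.reorient r) where
  adj_iff _ _ := (adj_reorient_iff hr).symm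
  immorality_iff a c b := by
    constructor
    · intro h
      exact ⟨.inl (.of_immorality h), .inl (.of_immorality h.symm), h.ne,
        fun hab => h.not_adj ((adj_reorient_iff hr).1 hab)⟩
    · rintro ⟨hac, hbc, hne, hab⟩
      rw [adj_reorient_iff hr] at hab
      rcases hac with hac | hac <;> rcases hbc with hbc | hbc
      · exact ⟨hac.edge, hbc.edge, hne, hab⟩
      · exact absurd (hac.adj_of_unforced hbc.1.symm) hab
      · exact absurd (hbc.adj_of_unforced hac.1.symm).symm hab
      · exact absurd (hclique c hac hbc hne).adj hab

lemma Unforced.exists_mEquiv_edge (hab : D.Unforced a b) : ∃ D', D.MEquiv D' ∧ D'.edge a b := by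
  have := Fintype.ofFinite V
  obtain ⟨r, hr, ha⟩ := exists_perfectOrdering D.exists_isClique_unforcedGraph
    (Finset.subset_univ {a}) (by simp)
  have hne (u v : V) (huv : D.Unforced u v) : r u ≠ r v :=
    hr.injOn.ne (Finset.mem_univ u) (Finset.mem_univ v) huv.adj.ne
  have hclique (v : V) : D.unforcedGraph.IsClique {u | D.Unforced u v ∧ r u < r v} := by
    simpa [unforcedGraph] using hr.isClique v (Finset.mem_univ v)
  exact ⟨D.reorient r, (samePattern_reorient hne hclique).mEquiv, .inr ⟨hab, ha a (by simp) b
    (Finset.mem_univ b) (by simpa using hab.adj.ne.symm)⟩⟩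

theorem cpDir_iff_forced : D.CpDir a b ↔ D.Forced a b := by
  refine ⟨fun h => ?_, fun h D' hD' => h.edge_of_samePattern (mEquiv_iff_samePattern.1 hD')⟩
  have hab : D.edge a b := h D (.refl D)
  by_contra hf
  have hba : D.Unforced b a := ⟨hab.adj.symm, fun hba => hba.edge.asymm hab, hf⟩
  obtain ⟨D', hD', hba'⟩ := hba.exists_mEquiv_edge
  exact hba'.asymm (h D' hD')

lemma CpUndir.unforced (h : D.CpUndir a b) : D.Unforced a b :=
  ⟨h.1, cpDir_iff_forced.not.1 h.2.1, cpDir_iff_forced.not.1 h.2.2⟩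

theorem CpDir.trans_cpUndir (hab : D.CpDir a b) (hbc : D.CpUndir b c) : D.CpDir a c :=
  cpDir_iff_forced.2 ((cpDir_iff_forced.1 hab).trans_unforced hbc.unforced)

end Reorientation

section CausalPaths

lemma _root_.GPath.reflTransGen {A R : V → V → Prop} (p : GPath A x y)
    (h : ∀ i : Fin p.n, R (p.f i.castSucc) (p.f i.succ)) : Relation.ReflTransGen R x y := by
  have hreach (i : Fin (p.n + 1)) : Relation.ReflTransGen R x (p.f i) := by
    induction i using Fin.induction with
    | zero =>
      have h_first : p.f 0 = x := p.first
      rw [h_first]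
    | succ i ih => exact ih.tail (h i)
  exact p.last ▸ hreach (Fin.last p.n)

lemma CpDir.edge (h : D.CpDir a b) : D.edge a b := h D (.refl D)

lemma ExplAn.transGen (h : D.ExplAn x y) (hne : x ≠ y) : Relation.TransGen D.CpDir x y := by
  obtain ⟨p, hp⟩ := h
  exact (Relation.reflTransGen_iff_eq_or_transGen.1 (p.reflTransGen hp)).resolve_left hne.symm

lemma PossAn.reflTransGen (h : D.PossAn x y) :
    Relation.ReflTransGen (fun a b => D.CpDir a b ∨ D.CpUndir a b) x y := by
  obtain ⟨p, hp⟩ := h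
  refine p.reflTransGen fun i => ?_
  by_cases hdir : D.CpDir (p.f i.castSucc) (p.f i.succ)
  · exact .inl hdir
  · exact .inr ⟨p.adj i, hdir, hp i⟩

lemma transGen_cpDir_trans [Finite V] (hab : Relation.TransGen D.CpDir a b)
    (hbc : Relation.ReflTransGen (fun a b => D.CpDir a b ∨ D.CpUndir a b) b c) :
    Relation.TransGen D.CpDir a c := by
  induction hbc with
  | refl => exact hab
  | tail _ hstep ih =>
    rcases hstep with hdir | hundir
    · exact ih.tail hdir
    · exact transGen_of_transGen_of_forall (fun _ _ _ => CpDir.trans_cpUndir) ih hundir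

end CausalPaths

end Dag

/-- For distinct `X`, `Y` in the CPDAG `G` of the MEC of a DAG, if `Y` is
an explicit ancestor of `X` in `G`, then `X` is a definite non-ancestor of `Y` in `G`
(there is no possibly directed path from `X` to `Y` in `G`). -/
theorem defNonAn_of_reverse_explAn
    {V : Type*} [Fintype V] (D : Dag V) (X Y : V) (hXY : X ≠ Y)
    (h : D.ExplAn Y X) : ¬ D.PossAn X Y := by
  intro hposs
  have hYX : Relation.TransGen D.CpDir Y X := h.transGen hXY.symm
  have hYY : Relation.TransGen D.CpDir Y Y := Dag.transGen_cpDir_trans hYX hposs.reflTransGen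
  exact Dag.not_transGen_self (fun _ _ => Dag.CpDir.edge) hYY
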